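/- Let T = {γ ∈ ℝ^n : γ_i < 0 for all i, Σ_{i=1}^n γ_i > −1} and f(γ) = ½ Σ_{i=1}^n γ_i log(−γ_i) − ½ (1 + Σ_{j=1}^n γ_j) log(1 + Σ_{j=1}^n γ_j). Then for every s ∈ ∂T = closure(T) \ T there exists δ > 0 such that for all γ ∈ T with ∇f(γ) ≠ 0 and all real numbers t₁, t₂ with 0 ≤ t₁ ≤ t₂ < δ, one has s + t₁ · ∇f(γ)/‖∇f(γ)‖ ≠ γ + t₂ · ∇f(γ)/‖∇f(γ)‖ in ℝ^n. -/

import Mathlib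

open scoped BigOperators

/-- The open cell `T = {γ ∈ ℝⁿ : γᵢ < 0, ∑ γᵢ > −1}`, inside Euclidean space. -/
def openCellT (n : ℕ) : Set (EuclideanSpace ℝ (Fin n)) :=
  {γ | (∀ i, γ i < 0) ∧ -1 < ∑ i, γ i}

/-- The potential `f` of the T-dual Lagrangian `L(O(−1), h_{−1})`. -/
noncomputable def potentialF (n : ℕ) (γ : EuclideanSpace ℝ (Fin n)) : ℝ :=
  (1 / 2) * ∑ i, γ i * Real.log (-γ i)
    - (1 / 2) * (1 + ∑ j, γ j) * Real.log (1 + ∑ j, γ j)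

/-- A uniform lower bound for the positive values of a finite family of reals. -/
lemma exists_pos_le_of_pos {ι : Type*} [Finite ι] (a : ι → ℝ) :
    ∃ ε : ℝ, 0 < ε ∧ ∀ i, 0 < a i → ε ≤ a i := by
  have h : ∀ᶠ ε in nhdsWithin (0 : ℝ) (Set.Ioi 0), ∀ i, 0 < a i → ε ≤ a i := by
    refine Filter.eventually_all.2 fun i => ?_
    by_cases hi : 0 < a i
    · filter_upwards [Ioo_mem_nhdsGT hi] with ε hε _ using hε.2.le
    · exact Filter.Eventually.of_forall fun ε h => absurd h hi
  obtain ⟨ε, h₁, h₂⟩ := (h.and self_mem_nhdsWithin).exists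
  exact ⟨ε, h₂, h₁⟩

lemma gradient_potentialF_apply {n : ℕ} {γ : EuclideanSpace ℝ (Fin n)} (hγ : γ ∈ openCellT n)
    (i : Fin n) :
    gradient (potentialF n) γ i = (1 / 2) * (Real.log (-γ i) - Real.log (1 + ∑ j, γ j)) := by
  obtain ⟨hneg, hsum⟩ := hγ
  have hcoord (j : Fin n) : HasFDerivAt (fun x : EuclideanSpace ℝ (Fin n) => x j)
      (EuclideanSpace.proj j : EuclideanSpace ℝ (Fin n) →L[ℝ] ℝ) γ :=
    (EuclideanSpace.proj j : EuclideanSpace ℝ (Fin n) →L[ℝ] ℝ).hasFDerivAt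
  have hS := (HasFDerivAt.fun_sum (u := Finset.univ) fun j _ => hcoord j).const_add 1
  have hterm (j : Fin n) := (hcoord j).mul ((hcoord j).neg.log (neg_ne_zero.2 (hneg j).ne))
  have hS0 : 1 + ∑ j, γ j ≠ 0 := by linarith
  have hf := ((HasFDerivAt.fun_sum (u := Finset.univ) fun j _ => hterm j).const_mul (1 / 2)).sub
    ((hS.const_mul (1 / 2)).mul (hS.log hS0))
  have hg : HasFDerivAt (potentialF n) _ γ := hf
  have hinner : gradient (potentialF n) γ i =
      inner ℝ (gradient (potentialF n) γ) (EuclideanSpace.single i 1) := by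
    rw [EuclideanSpace.inner_single_right, one_mul, conj_trivial]
  rw [hinner, gradient, InnerProductSpace.toDual_symm_apply, hg.fderiv]
  have hi : γ i ≠ 0 := (hneg i).ne
  simp [Finset.sum_add_distrib]
  field_simp
  ring

/-- The closure of the cell is contained in the closed simplex. -/
lemma closure_openCellT_subset (n : ℕ) :
    closure (openCellT n) ⊆ {γ | (∀ i, γ i ≤ 0) ∧ -1 ≤ ∑ i, γ i} := by
  refine closure_minimal (fun γ h => ⟨fun i => (h.1 i).le, h.2.le⟩) ?_
  rw [Set.ofPred_and, Set.ofPred_forall]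
  exact (isClosed_iInter fun i => isClosed_le (by fun_prop) continuous_const).inter
    (isClosed_le continuous_const (by fun_prop))

theorem stmt_10 (n : ℕ) (hn : 1 ≤ n) :
    ∀ s ∈ closure (openCellT n) \ openCellT n,
      ∃ δ : ℝ, 0 < δ ∧
        ∀ γ ∈ openCellT n, gradient (potentialF n) γ ≠ 0 →
          ∀ t₁ t₂ : ℝ, 0 ≤ t₁ → t₁ ≤ t₂ → t₂ < δ →
            s + t₁ • (‖gradient (potentialF n) γ‖⁻¹ • gradient (potentialF n) γ) ≠
              γ + t₂ • (‖gradient (potentialF n) γ‖⁻¹ • gradient (potentialF n) γ) := by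
  rintro s ⟨hs, hsT⟩
  obtain ⟨hs₁, hs₂⟩ := closure_openCellT_subset n hs
  obtain ⟨ε₁, hε₁, h₁⟩ := exists_pos_le_of_pos fun i => -s i
  obtain ⟨ε₂, hε₂, h₂⟩ := exists_pos_le_of_pos fun _ : Unit => 1 + ∑ i, s i
  have hn_pos : (0 : ℝ) < n + 1 := by positivity
  refine ⟨min ε₁ ε₂ / (n + 1), by positivity, fun γ hγ hg t₁ t₂ ht₁ ht ht₂ heq => ?_⟩
  rw [lt_div_iff₀ hn_pos, lt_min_iff] at ht₂
  obtain ⟨hδ₁, hδ₂⟩ := ht₂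
  set u := ‖gradient (potentialF n) γ‖⁻¹ • gradient (potentialF n) γ with hu
  have hu1 : ‖u‖ = 1 := norm_smul_inv_norm (𝕜 := ℝ) hg
  have hui (i : Fin n) : |u i| ≤ 1 := by
    simpa [hu1] using PiLp.norm_apply_le u i
  obtain ⟨hγ₁, hγ₂⟩ := id hγ
  have hx0 : 0 < 1 + ∑ j, γ j := by linarith
  -- the sign of `u i` compares the barycentric coordinates `-γ i` and `1 + ∑ j, γ j`
  have hupos (i : Fin n) : 0 < u i ↔ 1 + ∑ j, γ j < -γ i := by
    have : u i = ‖gradient (potentialF n) γ‖⁻¹ *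
        ((1 / 2) * (Real.log (-γ i) - Real.log (1 + ∑ j, γ j))) := by
      rw [← gradient_potentialF_apply hγ, hu]; rfl
    rw [this, mul_pos_iff_of_pos_left (by positivity), mul_pos_iff_of_pos_left (by norm_num),
      sub_pos, Real.log_lt_log_iff hx0 (by linarith [hγ₁ i])]
  obtain ⟨t, rfl⟩ : ∃ t, t₂ = t₁ + t := ⟨t₂ - t₁, by ring⟩
  have ht0 : 0 ≤ t := by linarith
  have hcoord (i : Fin n) : s i = γ i + t * u i := by
    have := congrArg (fun v : EuclideanSpace ℝ (Fin n) => v i) heq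
    simp only [PiLp.add_apply, PiLp.smul_apply, smul_eq_mul] at this
    linarith
  have hsum : ∑ i, s i = ∑ i, γ i + t * ∑ i, u i := by
    simp_rw [hcoord, Finset.sum_add_distrib, Finset.mul_sum]
  have husum : |∑ i, u i| ≤ n := by
    refine (Finset.abs_sum_le_sum_abs _ _).trans ((Finset.sum_le_sum fun i _ => hui i).trans ?_)
    simp
  have htn : t * |∑ i, u i| ≤ t * n := mul_le_mul_of_nonneg_left husum ht0
  have htu (i : Fin n) : t * |u i| ≤ t := mul_le_of_le_one_right ht0 (hui i)
  have hbd₁ : t * n + t < ε₁ := by nlinarith [mul_nonneg ht₁ hn_pos.le]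
  have hbd₂ : t * n + t < ε₂ := by nlinarith [mul_nonneg ht₁ hn_pos.le]
  -- a vanishing coordinate of `s` forces `u i > 0`
  have hzero (i : Fin n) (hi : s i = 0) : 0 < u i := by
    have h := hcoord i
    have := hγ₁ i
    exact pos_of_mul_pos_right (by linarith : 0 < t * u i) ht0
  rcases hs₂.lt_or_eq with hlt | heq0
  · obtain ⟨i, hi⟩ : ∃ i, s i = 0 := by
      by_contra! h
      exact hsT ⟨fun i => lt_of_le_of_ne (hs₁ i) (h i), hlt⟩
    have hcmp := (hupos i).1 (hzero i hi)
    have h := h₂ () (by linarith)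
    have h3 := mul_le_mul_of_nonneg_left (le_abs_self (u i)) ht0
    have h4 := mul_le_mul_of_nonneg_left (le_abs_self (∑ i, u i)) ht0
    linarith [hcoord i, htu i]
  · have h4 := mul_le_mul_of_nonneg_left (neg_abs_le (∑ i, u i)) ht0
    have hall (i : Fin n) : 0 < u i := by
      rcases (hs₁ i).lt_or_eq with hi | hi
      · have h := h₁ i (by linarith)
        have h3 := mul_le_mul_of_nonneg_left (neg_abs_le (u i)) ht0
        rw [hupos]
        linarith [hcoord i, htu i]
      · exact hzero i hi
    have := mul_nonneg ht0 (Finset.sum_nonneg fun i (_ : i ∈ Finset.univ) => (hall i).le)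
    linarith
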